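/- arXiv:2604.00914 — 2 statements merged into one kernel-verified Lean document; each statement's English description precedes it below -/
import Mathlib

section
/- For every real m > 0 and all integers k ≥ 1 and 1 ≤ k' ≤ k, one has Σ_{j=1}^{k'−1} (d^m_{j,k} − d^m_{j+1,k})/(j+1) ≤ m·C_m (the sum being empty when k' = 1). -/
open Real MeasureTheory

/-- Exponent-`m` Lanczos damping factors `d^m_{j,k}`, with `d^m_{0,k} = 1`. -/
noncomputable def dampL (m : ℝ) (k j : ℕ) : ℝ :=
  if j = 0 then 1
  else (Real.sin (j * Real.pi / (k + 1)) / (j * Real.pi / (k + 1))) ^ m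

/-- The constant `C_m = ∫_0^π (sin u)^{m-1}(sin u - u cos u)/u^{m+2} du`. -/
noncomputable def lanczosCm (m : ℝ) : ℝ :=
  ∫ u in Set.Ioo (0 : ℝ) Real.pi,
    Real.sin u ^ (m - 1) * (Real.sin u - u * Real.cos u) / u ^ (m + 2)

noncomputable def auxG (m u : ℝ) : ℝ :=
  Real.sin u ^ (m - 1) * (Real.sin u - u * Real.cos u) / u ^ (m + 2)

lemma aux_num_nonneg {u : ℝ} (h0 : 0 < u) (h1 : u < π) : 0 ≤ Real.sin u - u * Real.cos u := by
  rcases lt_or_ge u (π / 2) with h | h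
  · have hc : 0 < Real.cos u := Real.cos_pos_of_mem_Ioo ⟨by linarith, h⟩
    have := Real.lt_tan h0 h
    rw [Real.tan_eq_sin_div_cos, lt_div_iff₀ hc] at this
    linarith
  · have hc : Real.cos u ≤ 0 := Real.cos_nonpos_of_pi_div_two_le_of_le h (by linarith)
    have := Real.sin_pos_of_pos_of_lt_pi h0 h1
    nlinarith

lemma auxG_nonneg (m : ℝ) {u : ℝ} (h0 : 0 < u) (h1 : u < π) : 0 ≤ auxG m u := by
  have := Real.sin_pos_of_pos_of_lt_pi h0 h1
  have := aux_num_nonneg h0 h1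
  unfold auxG
  positivity

lemma auxG_eq (m : ℝ) {u : ℝ} (h0 : 0 < u) (h1 : u < π) :
    auxG m u = Real.sinc u ^ (m - 1) * ((Real.sin u - u * Real.cos u) / u ^ 3) := by
  have hs := Real.sin_pos_of_pos_of_lt_pi h0 h1
  rw [Real.sinc_of_ne_zero h0.ne', Real.div_rpow hs.le h0.le]
  unfold auxG
  have : u ^ (m + 2) = u ^ (m - 1) * u ^ 3 := by
    rw [← Real.rpow_natCast u 3, ← Real.rpow_add h0]; norm_num; ring_nf
  rw [this]
  have : 0 < u ^ (m - 1) := by positivity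
  field_simp

lemma aux_hasDeriv (m : ℝ) {u : ℝ} (h0 : 0 < u) (h1 : u < π) :
    HasDerivAt (fun v => -(Real.sinc v ^ m)) (m * u * auxG m u) u := by
  have hs := Real.sin_pos_of_pos_of_lt_pi h0 h1
  have hd : HasDerivAt Real.sinc ((Real.cos u * u - Real.sin u * 1) / u ^ 2) u := by
    refine ((Real.hasDerivAt_sin u).div (hasDerivAt_id u) h0.ne').congr_of_eventuallyEq ?_
    filter_upwards [lt_mem_nhds h0] with v hv
    simp [Real.sinc_of_ne_zero hv.ne']
  have hp : Real.sinc u ≠ 0 := by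
    rw [Real.sinc_of_ne_zero h0.ne']; positivity
  refine (hd.rpow_const (p := m) (Or.inl hp)).neg.congr_deriv ?_
  rw [auxG_eq m h0 h1]
  field_simp
  ring

lemma aux_cont (m : ℝ) (hm : 0 < m) : Continuous (fun v => -(Real.sinc v ^ m)) :=
  (Real.continuous_sinc.rpow_const (fun _ => Or.inr hm.le)).neg

lemma aux_int1 (m : ℝ) (hm : 0 < m) : IntegrableOn (fun u => m * u * auxG m u) (Set.Ioc 0 π) := by
  refine intervalIntegral.integrableOn_deriv_of_nonneg (aux_cont m hm).continuousOn
    (fun u hu => aux_hasDeriv m hu.1 hu.2) (fun u hu => ?_)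
  have := auxG_nonneg m hu.1 hu.2
  have := hu.1
  positivity

lemma auxG_meas (m : ℝ) : Measurable (auxG m) := by
  unfold auxG
  fun_prop

lemma aux_int2 (m : ℝ) (hm : 0 < m) : IntegrableOn (auxG m) (Set.Ioc 0 π) := by
  have hpi := Real.pi_gt_three
  rw [← Set.Ioc_union_Ioc_eq_Ioc (b := 1) (by norm_num) (by linarith)]
  refine IntegrableOn.union ?_ ?_
  · have hc : ContinuousOn (fun u => Real.sinc u ^ (m - 1)) (Set.Icc 0 1) := by
      refine Real.continuous_sinc.continuousOn.rpow_const (fun u hu => Or.inl ?_)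
      rcases eq_or_lt_of_le hu.1 with h | h
      · rw [← h]; simp
      · rw [Real.sinc_of_ne_zero h.ne']
        have := Real.sin_pos_of_pos_of_lt_pi h (by linarith [hu.2])
        positivity
    obtain ⟨C, hC⟩ := isCompact_Icc.exists_bound_of_continuousOn hc
    refine Measure.integrableOn_of_bounded (M := C * (1/2)) (by simp)
      (auxG_meas m).aestronglyMeasurable ?_
    refine (ae_restrict_iff' measurableSet_Ioc).2 (Filter.Eventually.of_forall fun u hu => ?_)
    have h1 : u < π := by linarith [hu.2]
    have h0 := hu.1
    rw [auxG_eq m h0 h1, norm_mul]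
    have hCu := hC u ⟨h0.le, hu.2⟩
    have hn := aux_num_nonneg h0 h1
    refine mul_le_mul hCu ?_ (norm_nonneg _) ((norm_nonneg _).trans hCu)
    rw [Real.norm_of_nonneg (by positivity), div_le_iff₀ (by positivity)]
    have a1 := Real.sin_le h0.le
    have a2 := Real.one_sub_sq_div_two_le_cos (x := u)
    nlinarith
  · have hi : IntegrableOn (fun u => m * u * auxG m u) (Set.Ioc 1 π) :=
      (aux_int1 m hm).mono_set (Set.Ioc_subset_Ioc_left (by norm_num))
    have hi2 : IntegrableOn (fun u => 1 / m * (m * u * auxG m u)) (Set.Ioc 1 π) :=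
      hi.const_mul (1 / m)
    replace hi2 := hi2.mono_set Set.Ioo_subset_Ioc_self
    rw [integrableOn_Ioc_iff_integrableOn_Ioo]
    refine Integrable.mono' hi2 (auxG_meas m).aestronglyMeasurable ?_
    refine (ae_restrict_iff' measurableSet_Ioo).2 (Filter.Eventually.of_forall fun u hu => ?_)
    have hg := auxG_nonneg m (by linarith [hu.1]) hu.2
    rw [Real.norm_of_nonneg hg]
    have : 1 / m * (m * u * auxG m u) = u * auxG m u := by field_simp
    rw [this]
    nlinarith [hu.1]

lemma aux_ii (m : ℝ) (hm : 0 < m) {x y : ℝ} (hx : 0 ≤ x) (hxy : x ≤ y) (hy : y ≤ π) :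
    IntervalIntegrable (auxG m) volume x y := by
  rw [intervalIntegrable_iff_integrableOn_Ioc_of_le hxy]
  exact (aux_int2 m hm).mono_set (Set.Ioc_subset_Ioc hx hy)

lemma aux_nonneg (m : ℝ) {x y : ℝ} (hx : 0 ≤ x) (hxy : x ≤ y) (hy : y ≤ π) :
    0 ≤ ∫ u in x..y, auxG m u := by
  rw [intervalIntegral.integral_of_le hxy, integral_Ioc_eq_integral_Ioo]
  exact setIntegral_nonneg measurableSet_Ioo
    (fun u hu => auxG_nonneg m (by linarith [hu.1]) (by linarith [hu.2]))

lemma aux_main (m : ℝ) (hm : 0 < m) {x y : ℝ} (hx : 0 ≤ x) (hxy : x ≤ y) (hy : y ≤ π) :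
    Real.sinc x ^ m - Real.sinc y ^ m ≤ y * (m * ∫ u in x..y, auxG m u) := by
  have hi : IntervalIntegrable (fun u => m * u * auxG m u) volume x y := by
    rw [intervalIntegrable_iff_integrableOn_Ioc_of_le hxy]
    exact (aux_int1 m hm).mono_set (Set.Ioc_subset_Ioc hx hy)
  have h := intervalIntegral.integral_eq_sub_of_hasDerivAt_of_le hxy
    (aux_cont m hm).continuousOn
    (fun u hu => aux_hasDeriv m (by linarith [hu.1]) (by linarith [hu.2])) hi
  have h2 : ∫ u in x..y, m * u * auxG m u ≤ ∫ u in x..y, y * m * auxG m u := by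
    refine intervalIntegral.integral_mono_on_of_le_Ioo hxy hi
      ((aux_ii m hm hx hxy hy).const_mul _) (fun u hu => ?_)
    have hg := auxG_nonneg m (u := u) (by linarith [hu.1]) (by linarith [hu.2])
    have : m * u ≤ y * m := by nlinarith [hu.2]
    exact mul_le_mul_of_nonneg_right this hg
  rw [intervalIntegral.integral_const_mul] at h2
  linarith

lemma dampL_eq (m : ℝ) (k j : ℕ) (hj : 1 ≤ j) :
    dampL m k j = Real.sinc (j * (π / (k + 1))) ^ m := by
  have : (0 : ℝ) < j := by exact_mod_cast hj
  have := Real.pi_pos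
  rw [dampL, if_neg (by omega), Real.sinc_of_ne_zero (by positivity), mul_div_assoc]

lemma aux_sum (m : ℝ) (hm : 0 < m) (k n : ℕ) (hn : n ≤ k) :
    ∑ j ∈ Finset.Icc 1 n, (dampL m k j - dampL m k (j + 1)) / (j + 1)
      ≤ (π / (k + 1)) * (m * ∫ u in (π / (k + 1))..((n + 1) * (π / (k + 1))), auxG m u) := by
  have hpi := Real.pi_pos
  set h := π / ((k : ℝ) + 1) with hh
  have hp : 0 < h := by positivity
  have hkh : ((k : ℝ) + 1) * h = π := by rw [hh]; field_simp
  induction n with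
  | zero => simp
  | succ n ih =>
    have ih := ih (by omega)
    rw [Finset.sum_Icc_succ_top (by omega)]
    have hnk : (n : ℝ) + 1 ≤ k := by exact_mod_cast hn
    have hn0 : (0 : ℝ) ≤ n := n.cast_nonneg
    have e1 : h ≤ (n + 1) * h := by nlinarith
    have e2 : ((n : ℝ) + 1) * h ≤ (n + 1 + 1) * h := by nlinarith
    have e3 : ((n : ℝ) + 1 + 1) * h ≤ π := by nlinarith
    have hM := aux_main m hm (by positivity) e2 e3
    have hadd := intervalIntegral.integral_add_adjacent_intervals
      (aux_ii m hm hp.le e1 (e2.trans e3)) (aux_ii m hm (by positivity) e2 e3)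
    rw [dampL_eq m k (n + 1) (by omega), dampL_eq m k (n + 1 + 1) (by omega), ← hh]
    push_cast
    rw [← hadd]
    have : (Real.sinc (((n : ℝ) + 1) * h) ^ m - Real.sinc (((n : ℝ) + 1 + 1) * h) ^ m) / (n + 1 + 1)
        ≤ h * (m * ∫ u in ((n : ℝ) + 1) * h..((n : ℝ) + 1 + 1) * h, auxG m u) := by
      rw [div_le_iff₀ (by positivity)]
      linarith
    linarith

lemma aux_Cm (m : ℝ) : lanczosCm m = ∫ u in (0:ℝ)..π, auxG m u := by
  rw [intervalIntegral.integral_of_le Real.pi_pos.le, integral_Ioc_eq_integral_Ioo]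
  rfl

lemma aux_two (m : ℝ) (hm : 0 < m) :
    (dampL m 2 1 - dampL m 2 2) / 2 ≤ m * lanczosCm m := by
  have hpi := Real.pi_gt_d2
  have hpi2 := Real.pi_lt_d2
  have hA := aux_main m hm (x := 0) (y := π / 3) le_rfl (by linarith) (by linarith)
  have hB := aux_main m hm (x := π / 3) (y := 2 * (π / 3)) (by linarith) (by linarith) (by linarith)
  have hC := aux_nonneg m (x := 2 * (π / 3)) (y := π) (by linarith) (by linarith) (by linarith)
  have i1 := aux_ii m hm (x := 0) (y := π / 3) le_rfl (by linarith) (by linarith)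
  have i2 := aux_ii m hm (x := π / 3) (y := 2 * (π / 3)) (by linarith) (by linarith) (by linarith)
  have i3 := aux_ii m hm (x := 2 * (π / 3)) (y := π) (by linarith) (by linarith) (by linarith)
  rw [aux_Cm, ← intervalIntegral.integral_add_adjacent_intervals (i1.trans i2) i3,
    ← intervalIntegral.integral_add_adjacent_intervals i1 i2,
    dampL_eq m 2 1 (by omega), dampL_eq m 2 2 (by omega)]
  have e1 : ((1 : ℕ) : ℝ) * (π / ((2 : ℕ) + 1)) = π / 3 := by norm_num
  have e2 : ((2 : ℕ) : ℝ) * (π / ((2 : ℕ) + 1)) = 2 * (π / 3) := by norm_num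
  rw [e1, e2]
  set I1 := ∫ u in (0:ℝ)..π / 3, auxG m u
  set I2 := ∫ u in π / 3..2 * (π / 3), auxG m u
  set I3 := ∫ u in 2 * (π / 3)..π, auxG m u
  set a := Real.sinc (π / 3) with ha
  have h3 : √3 ^ 2 = 3 := Real.sq_sqrt (by norm_num)
  have ha' : a = √3 / 2 / (π / 3) := by
    rw [ha, Real.sinc_of_ne_zero (by positivity), Real.sin_pi_div_three]
  have hb' : Real.sinc (2 * (π / 3)) = a / 2 := by
    rw [ha', Real.sinc_of_ne_zero (by positivity), Real.sin_two_mul, Real.sin_pi_div_three,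
      Real.cos_pi_div_three]
    field_simp
  have ha0 : 0 < a := by rw [ha']; positivity
  have ha1 : a ≤ 1 := Real.sinc_le_one _
  have hsq : a ^ 2 ≤ 0.7 := by
    have : a ^ 2 = 27 / (4 * π ^ 2) := by
      rw [ha', div_pow, div_pow, h3]; field_simp; norm_num
    rw [this, div_le_iff₀ (by positivity)]
    nlinarith
  have h5 : a ^ 5 ≤ a / 2 := by
    have : a ^ 4 ≤ 1 / 2 := by nlinarith [sq_nonneg a]
    nlinarith
  rw [hb'] at hB ⊢
  have h6 : (a ^ m) ^ 5 ≤ (a / 2) ^ m := by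
    rw [← Real.rpow_natCast, ← Real.rpow_mul ha0.le, mul_comm, Real.rpow_mul ha0.le]
    refine Real.rpow_le_rpow (by positivity) ?_ hm.le
    exact_mod_cast h5
  have h7 : a ^ m ≤ 1 := Real.rpow_le_one ha0.le ha1 hm.le
  have h8 : 0 < a ^ m := by positivity
  rw [Real.sinc_zero, Real.one_rpow] at hA
  set d1 := a ^ m
  set d2 := (a / 2) ^ m
  have h9 : d1 - d2 ≤ 4 * (1 - d1) := by
    have : 1 + 5 * (d1 - 1) ≤ d1 ^ 5 := by
      have := one_add_mul_le_pow (a := d1 - 1) (by linarith) 5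
      norm_num at this ⊢
      linarith
    linarith
  have hm3 : 0 ≤ m * I3 := by positivity
  have key : (d1 - d2) / 2 * π ≤ (m * I1 + m * I2) * π := by
    by_cases hd : 0 ≤ d1 - d2
    · nlinarith
    · nlinarith
  have := le_of_mul_le_mul_right key Real.pi_pos
  linarith

theorem dampL_diff_sum_le (m : ℝ) (hm : 0 < m) (k k' : ℕ) (hk : 1 ≤ k)
    (hk' : 1 ≤ k') (hk'k : k' ≤ k) :
    ∑ j ∈ Finset.Icc 1 (k' - 1), (dampL m k j - dampL m k (j + 1)) / (j + 1)
      ≤ m * lanczosCm m := by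
  have hpi := Real.pi_pos
  rcases Nat.lt_or_ge 2 k with h3 | h3
  · obtain ⟨n, rfl⟩ : ∃ n, k' = n + 1 := ⟨k' - 1, by omega⟩
    rw [Nat.add_sub_cancel]
    refine (aux_sum m hm k n (by omega)).trans ?_
    have hk3 : (3 : ℝ) ≤ k := by exact_mod_cast h3
    have hnk : (n : ℝ) + 1 ≤ k := by exact_mod_cast hk'k
    set h := π / ((k : ℝ) + 1) with hh
    have hp : 0 < h := by positivity
    have hkh : ((k : ℝ) + 1) * h = π := by rw [hh]; field_simp
    have hn0 : (0 : ℝ) ≤ n := n.cast_nonneg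
    have h1 : h ≤ 1 := by
      rw [hh, div_le_one (by positivity)]
      linarith [Real.pi_le_four]
    have e1 : h ≤ (n + 1) * h := by nlinarith
    have e3 : ((n : ℝ) + 1) * h ≤ π := by nlinarith
    have j1 := aux_ii m hm (x := 0) (y := h) le_rfl hp.le (e1.trans e3)
    have j2 := aux_ii m hm hp.le e1 e3
    have j3 := aux_ii m hm (x := (n + 1) * h) (y := π) (by positivity) e3 le_rfl
    have n1 := aux_nonneg m (x := 0) (y := h) le_rfl hp.le (e1.trans e3)
    have n2 := aux_nonneg m hp.le e1 e3
    have n3 := aux_nonneg m (x := (n + 1) * h) (y := π) (by positivity) e3 le_rfl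
    rw [aux_Cm, ← intervalIntegral.integral_add_adjacent_intervals (j1.trans j2) j3,
      ← intervalIntegral.integral_add_adjacent_intervals j1 j2]
    refine (mul_le_of_le_one_left (by positivity) h1).trans ?_
    refine mul_le_mul_of_nonneg_left ?_ hm.le
    linarith
  · rcases Nat.lt_or_ge 1 k' with h2 | h2
    · obtain rfl : k' = 2 := by omega
      obtain rfl : k = 2 := by omega
      have := aux_two m hm
      norm_num
      exact this
    · obtain rfl : k' = 1 := by omega
      have := aux_nonneg m (x := 0) (y := π) le_rfl hpi.le le_rfl
      rw [aux_Cm]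
      simp only [Nat.sub_self]
      rw [Finset.Icc_eq_empty (by norm_num), Finset.sum_empty]
      positivity
end

section
/- For every real m > 0, all integers k ≥ 1 and 1 ≤ k' ≤ k, and every x ∈ (0, 2π), define E(x) = (π − x)/2 − Σ_{j=1}^{k'} d^m_{j,k} sin(j x)/j. Then |E(x)| ≤ (1 − d^m_{1,k})·|π − x|/2 + (1/|sin(x/2)|)·( Σ_{j=1}^{k'−1} (d^m_{j,k} − d^m_{j+1,k})/(j+1) + d^m_{k',k}/(k'+1) ). -/
open Real

noncomputable def RR (n : ℕ) (t : ℝ) : ℝ :=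
  (π - t) / 2 - ∑ j ∈ Finset.range n, sin (((j : ℝ) + 1) * t) / ((j : ℝ) + 1)

lemma RR_succ (n : ℕ) (t : ℝ) :
    RR (n + 1) t = RR n t - sin (((n : ℝ) + 1) * t) / ((n : ℝ) + 1) := by
  unfold RR; rw [Finset.sum_range_succ]; ring

lemma two_sin_mul (n : ℕ) (t : ℝ) :
    2 * sin (t / 2) * sin (((n : ℝ) + 1) * t)
      = cos (((n : ℝ) + 1 / 2) * t) - cos (((n : ℝ) + 1 + 1 / 2) * t) := by
  have h1 : ((n : ℝ) + 1 / 2) * t = ((n : ℝ) + 1) * t - t / 2 := by ring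
  have h2 : ((n : ℝ) + 1 + 1 / 2) * t = ((n : ℝ) + 1) * t + t / 2 := by ring
  rw [h1, h2, cos_sub, cos_add]; ring

lemma two_sin_mul_cos (n : ℕ) (t : ℝ) :
    2 * sin (t / 2) * cos (((n : ℝ) + 1) * t)
      = sin (((n : ℝ) + 1 + 1 / 2) * t) - sin (((n : ℝ) + 1 / 2) * t) := by
  have h1 : ((n : ℝ) + 1 / 2) * t = ((n : ℝ) + 1) * t - t / 2 := by ring
  have h2 : ((n : ℝ) + 1 + 1 / 2) * t = ((n : ℝ) + 1) * t + t / 2 := by ring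
  rw [h1, h2, sin_sub, sin_add]; ring

lemma RR_deriv (n : ℕ) (t : ℝ) (ht : sin (t / 2) ≠ 0) :
    HasDerivAt (RR n) (-(sin (((n : ℝ) + 1 / 2) * t) / (2 * sin (t / 2)))) t := by
  induction n with
  | zero =>
    have h : HasDerivAt (fun t : ℝ => (π - t) / 2) (-1 / 2) t :=
      ((hasDerivAt_id t).const_sub π).div_const 2
    have e : RR 0 = fun t : ℝ => (π - t) / 2 := by funext t; simp [RR]
    rw [e]
    convert h using 1
    have : ((0 : ℕ) : ℝ) + 1 / 2 = 1 / 2 := by norm_num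
    rw [this, show (1 / 2 : ℝ) * t = t / 2 by ring]
    field_simp
  | succ n ih =>
    have e : RR (n + 1) = fun t => RR n t - sin (((n : ℝ) + 1) * t) / ((n : ℝ) + 1) := by
      funext t; exact RR_succ n t
    rw [e]
    have h0 : (n : ℝ) + 1 ≠ 0 := by positivity
    have h1 : HasDerivAt (fun t : ℝ => ((n : ℝ) + 1) * t) ((n : ℝ) + 1) t := by
      simpa using (hasDerivAt_id t).const_mul ((n : ℝ) + 1)
    have h := ih.sub (h1.sin.div_const ((n : ℝ) + 1))
    refine HasDerivAt.congr_deriv h ?_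
    have := two_sin_mul_cos n t
    push_cast
    rw [mul_div_assoc, div_self h0, mul_one, sub_eq_add_neg, ← neg_add, neg_inj,
      div_add' _ _ _ (mul_ne_zero two_ne_zero ht)]
    congr 1
    linarith

lemma RR_pi (n : ℕ) : RR n π = 0 := by
  unfold RR
  rw [Finset.sum_eq_zero]
  · simp
  · intro j _
    have := sin_nat_mul_pi (j + 1)
    push_cast at this
    rw [this]; simp

lemma cos_half_pi (n : ℕ) : cos (((n : ℝ) + 1 / 2) * π) = 0 := by
  rw [show ((n : ℝ) + 1 / 2) * π = n * π + π / 2 by ring, cos_add_pi_div_two, sin_nat_mul_pi]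
  simp

lemma sin_half_pos {x : ℝ} (hx : x ∈ Set.Ioo (0 : ℝ) (2 * π)) : 0 < sin (x / 2) :=
  sin_pos_of_pos_of_lt_pi (by linarith [hx.1]) (by linarith [hx.2])

lemma RR_crude (n : ℕ) (x : ℝ) (hx : x ∈ Set.Ioo (0 : ℝ) (2 * π)) :
    |RR n x| ≤ (1 / sin (x / 2) + (1 / (2 * sin (x / 2) ^ 2)) * |x - π|) / (2 * n + 1) := by
  have hs := sin_half_pos hx
  set s := sin (x / 2) with hsdef
  have hN : (0 : ℝ) < 2 * n + 1 := by positivity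
  have hge : ∀ t ∈ Set.uIcc x π, s ≤ sin (t / 2) := by
    intro t ht
    have habs : |t - π| ≤ |x - π| := Set.abs_sub_right_of_mem_uIcc ht |>.trans_eq (abs_sub_comm _ _) |> fun h => by
      first
      | exact h
      | (rw [abs_sub_comm]; exact h)
    have e : ∀ u : ℝ, sin (u / 2) = cos (|u - π| / 2) := by
      intro u
      rw [show |u - π| / 2 = |(u - π) / 2| by rw [abs_div]; norm_num, cos_abs,
        show (u - π) / 2 = u / 2 - π / 2 by ring, cos_sub_pi_div_two]
    rw [hsdef, e, e]
    have hxa : |x - π| ≤ π := abs_le.2 ⟨by linarith [hx.1], by linarith [hx.2]⟩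
    exact cos_le_cos_of_nonneg_of_le_pi (by positivity) (by linarith [pi_pos]) (by linarith)
  have hder : ∀ t ∈ Set.uIcc x π, HasDerivWithinAt
      (fun t => RR n t - cos (((n : ℝ) + 1 / 2) * t) / ((2 * n + 1) * sin (t / 2)))
      (cos (((n : ℝ) + 1 / 2) * t) * cos (t / 2) / (2 * (2 * n + 1) * sin (t / 2) ^ 2))
      (Set.uIcc x π) t := by
    intro t ht
    have hst : sin (t / 2) ≠ 0 := (hs.trans_le (hge t ht)).ne'
    have h1 : HasDerivAt (fun t : ℝ => ((n : ℝ) + 1 / 2) * t) ((n : ℝ) + 1 / 2) t := by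
      simpa using (hasDerivAt_id t).const_mul ((n : ℝ) + 1 / 2)
    have h2 : HasDerivAt (fun t : ℝ => t / 2) (1 / 2) t := (hasDerivAt_id t).div_const 2
    have h := (RR_deriv n t hst).sub (h1.cos.div (h2.sin.const_mul (2 * (n : ℝ) + 1))
      (mul_ne_zero hN.ne' hst))
    refine HasDerivAt.hasDerivWithinAt ?_
    refine HasDerivAt.congr_deriv h ?_
    field_simp
    ring
  have hb : ∀ t ∈ Set.uIcc x π,
      ‖cos (((n : ℝ) + 1 / 2) * t) * cos (t / 2) / (2 * (2 * n + 1) * sin (t / 2) ^ 2)‖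
        ≤ 1 / (2 * (2 * n + 1) * s ^ 2) := by
    intro t ht
    have hst := hge t ht
    have hst0 : 0 < sin (t / 2) := hs.trans_le hst
    rw [norm_div, norm_mul, Real.norm_eq_abs, Real.norm_eq_abs, Real.norm_eq_abs,
      abs_of_pos (show 0 < 2 * (2 * (n : ℝ) + 1) * sin (t / 2) ^ 2 by positivity)]
    have := mul_le_one₀ (abs_cos_le_one (((n : ℝ) + 1 / 2) * t)) (abs_nonneg _)
      (abs_cos_le_one (t / 2))
    gcongr
  have := (convex_uIcc x π).norm_image_sub_le_of_norm_hasDerivWithin_le hder hb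
    Set.right_mem_uIcc Set.left_mem_uIcc
  simp only [RR_pi, cos_half_pi, zero_div, sub_zero, Real.norm_eq_abs] at this
  rw [← hsdef] at this
  have h3 : |cos (((n : ℝ) + 1 / 2) * x) / ((2 * n + 1) * s)| ≤ 1 / ((2 * n + 1) * s) := by
    rw [abs_div, abs_of_pos (show 0 < (2 * (n : ℝ) + 1) * s by positivity)]
    have := abs_cos_le_one (((n : ℝ) + 1 / 2) * x)
    gcongr
  have h4 : (1 / s + (1 / (2 * s ^ 2)) * |x - π|) / (2 * n + 1)
      = 1 / (2 * (2 * n + 1) * s ^ 2) * |x - π| + 1 / ((2 * n + 1) * s) := by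
    field_simp
    ring
  rw [h4]
  have h5 := abs_sub_abs_le_abs_sub (RR n x) (cos (((n : ℝ) + 1 / 2) * x) / ((2 * n + 1) * s))
  linarith

noncomputable def VV (x : ℝ) (n : ℕ) : ℝ :=
  2 * sin (x / 2) * RR n x - cos (((n : ℝ) + 1 / 2) * x) / ((n : ℝ) + 1)

lemma VV_tendsto (x : ℝ) (hx : x ∈ Set.Ioo (0 : ℝ) (2 * π)) :
    Filter.Tendsto (VV x) Filter.atTop (nhds 0) := by
  have hs := sin_half_pos hx
  have h0 : Filter.Tendsto (fun n : ℕ => (2 * (n : ℝ) + 1)) Filter.atTop Filter.atTop :=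
    Filter.tendsto_atTop_add_const_right _ _
      (tendsto_natCast_atTop_atTop.const_mul_atTop (by norm_num))
  have h1 : Filter.Tendsto (fun n => RR n x) Filter.atTop (nhds 0) :=
    squeeze_zero_norm (fun n => RR_crude n x hx) (h0.const_div_atTop _)
  have h2 : Filter.Tendsto (fun n : ℕ => cos (((n : ℝ) + 1 / 2) * x) / ((n : ℝ) + 1))
      Filter.atTop (nhds 0) := by
    refine squeeze_zero_norm (a := fun n : ℕ => 1 / ((n : ℝ) + 1)) (fun n => ?_)
      tendsto_one_div_add_atTop_nhds_zero_nat
    rw [Real.norm_eq_abs, abs_div, abs_of_pos (show 0 < (n : ℝ) + 1 by positivity)]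
    have := abs_cos_le_one (((n : ℝ) + 1 / 2) * x)
    gcongr
  have := (h1.const_mul (2 * sin (x / 2))).sub h2
  rw [mul_zero, sub_zero] at this
  exact this

lemma VV_step (x : ℝ) (n : ℕ) :
    |VV x n - VV x (n + 1)| ≤ 1 / ((n : ℝ) + 1) - 1 / ((n : ℝ) + 2) := by
  have e : VV x n - VV x (n + 1)
      = -(cos (((n : ℝ) + 1 + 1 / 2) * x) * (1 / ((n : ℝ) + 1) - 1 / ((n : ℝ) + 2))) := by
    have h := two_sin_mul n x
    have h' : 2 * sin (x / 2) * (sin (((n : ℝ) + 1) * x) / ((n : ℝ) + 1))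
      = (cos (((n : ℝ) + 1 / 2) * x) - cos (((n : ℝ) + 1 + 1 / 2) * x)) / ((n : ℝ) + 1) := by
      rw [← h]; ring
    unfold VV
    rw [RR_succ]
    push_cast
    rw [mul_sub, h', show (n : ℝ) + 1 + 1 = n + 2 by ring]
    ring
  have hp : 0 ≤ 1 / ((n : ℝ) + 1) - 1 / ((n : ℝ) + 2) := by
    rw [sub_nonneg]; gcongr; norm_num
  rw [e, abs_neg, abs_mul, abs_of_nonneg hp]
  exact mul_le_of_le_one_left hp (abs_cos_le_one _)

lemma VV_diff (x : ℝ) (n p : ℕ) :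
    |VV x n - VV x (n + p)| ≤ 1 / ((n : ℝ) + 1) - 1 / ((n : ℝ) + p + 1) := by
  induction p with
  | zero => simp
  | succ p ih =>
    have h := VV_step x (n + p)
    have := abs_sub_le (VV x n) (VV x (n + p)) (VV x (n + p + 1))
    push_cast at h ⊢
    rw [← add_assoc n p 1, show (n : ℝ) + (p + 1) + 1 = n + p + 2 by ring]
    linarith

lemma RR_bound (n : ℕ) (x : ℝ) (hx : x ∈ Set.Ioo (0 : ℝ) (2 * π)) :
    |RR n x| ≤ 1 / |sin (x / 2)| * (1 / ((n : ℝ) + 1)) := by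
  have hs := sin_half_pos hx
  have hV : |VV x n| ≤ 1 / ((n : ℝ) + 1) := by
    have h1 : Filter.Tendsto (fun p => |VV x n - VV x (p + n)|) Filter.atTop
        (nhds |VV x n - 0|) :=
      (((Filter.tendsto_add_atTop_iff_nat n).2 (VV_tendsto x hx)).const_sub _).abs
    rw [sub_zero] at h1
    refine le_of_tendsto' h1 (fun p => ?_)
    rw [add_comm p n]
    have : 0 ≤ 1 / ((n : ℝ) + p + 1) := by positivity
    linarith [VV_diff x n p]
  have hc : |cos (((n : ℝ) + 1 / 2) * x) / ((n : ℝ) + 1)| ≤ 1 / ((n : ℝ) + 1) := by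
    rw [abs_div, abs_of_pos (show 0 < (n : ℝ) + 1 by positivity)]
    have := abs_cos_le_one (((n : ℝ) + 1 / 2) * x)
    gcongr
  have h2 : |2 * sin (x / 2) * RR n x| ≤ 2 * (1 / ((n : ℝ) + 1)) := by
    have := abs_add_le (VV x n) (cos (((n : ℝ) + 1 / 2) * x) / ((n : ℝ) + 1))
    have e : VV x n + cos (((n : ℝ) + 1 / 2) * x) / ((n : ℝ) + 1) = 2 * sin (x / 2) * RR n x := by
      unfold VV; ring
    rw [e] at this
    linarith
  rw [abs_of_pos hs]
  rw [abs_mul, abs_of_pos (show 0 < 2 * sin (x / 2) by positivity)] at h2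
  rw [one_div_mul_eq_div, le_div_iff₀ hs]
  linarith

lemma sinc_anti {a b : ℝ} (ha : 0 < a) (hab : a ≤ b) (hb : b ≤ π) :
    sin b / b ≤ sin a / a := by
  have hb0 : 0 < b := ha.trans_le hab
  have h := strictConcaveOn_sin_Icc.concaveOn.2 (show (0 : ℝ) ∈ Set.Icc 0 π from ⟨le_rfl, pi_pos.le⟩)
    (show b ∈ Set.Icc 0 π from ⟨hb0.le, hb⟩)
    (show 0 ≤ 1 - a / b by rw [sub_nonneg, div_le_one hb0]; exact hab)
    (show 0 ≤ a / b by positivity) (by ring)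
  simp only [smul_eq_mul, mul_zero, sin_zero, zero_add] at h
  rw [div_mul_cancel₀ _ hb0.ne'] at h
  rw [le_div_iff₀ ha]
  calc sin b / b * a = a / b * sin b := by ring
    _ ≤ _ := h

lemma arg_le (k j : ℕ) (hj : j ≤ k + 1) : (j : ℝ) * π / (k + 1) ≤ π := by
  have : (j : ℝ) ≤ k + 1 := by exact_mod_cast hj
  rw [div_le_iff₀ (by positivity), mul_comm π]
  exact mul_le_mul_of_nonneg_right this pi_pos.le

lemma base_nonneg (k j : ℕ) (hj : j ≤ k + 1) :
    0 ≤ sin ((j : ℝ) * π / (k + 1)) / ((j : ℝ) * π / (k + 1)) :=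
  div_nonneg (sin_nonneg_of_nonneg_of_le_pi (by positivity) (arg_le k j hj)) (by positivity)

lemma damp_nonneg (m : ℝ) (k j : ℕ) (hj : j ≤ k + 1) : 0 ≤ dampL m k j := by
  unfold dampL
  split_ifs
  · norm_num
  · exact rpow_nonneg (base_nonneg k j hj) m

lemma damp_anti (m : ℝ) (hm : 0 < m) (k j : ℕ) (hj : j ≤ k) :
    dampL m k (j + 1) ≤ dampL m k j := by
  have hb := base_nonneg k (j + 1) (by omega)
  have hpos : 0 < ((j + 1 : ℕ) : ℝ) * π / (k + 1) := by positivity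
  unfold dampL
  rw [if_neg (Nat.succ_ne_zero j)]
  split_ifs with h
  · refine rpow_le_one hb ?_ hm.le
    rw [div_le_one hpos]
    exact sin_le hpos.le
  · refine rpow_le_rpow hb (sinc_anti ?_ ?_ (arg_le k (j + 1) (by omega))) hm.le
    · have : 0 < j := Nat.pos_of_ne_zero h
      positivity
    · gcongr; omega

lemma abel_id (d : ℕ → ℝ) (x : ℝ) (n : ℕ) :
    (π - x) / 2 - ∑ j ∈ Finset.Icc 1 (n + 1), d j * sin (j * x) / j
      = (1 - d 1) * ((π - x) / 2)
        + ((∑ j ∈ Finset.Icc 1 n, (d j - d (j + 1)) * RR j x) + d (n + 1) * RR (n + 1) x) := by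
  induction n with
  | zero => simp [RR]; ring
  | succ n ih =>
    rw [Finset.sum_Icc_succ_top (by omega), ← sub_sub, ih,
      Finset.sum_Icc_succ_top (by omega), RR_succ (n + 1)]
    push_cast
    ring

/-- For `E(x) = (π - x)/2 - ∑_{j=1}^{k'} d^m_{j,k} sin(jx)/j` and `x ∈ (0, 2π)`,
`|E(x)| ≤ (1 - d^m_{1,k})|π - x|/2
  + (1/|sin(x/2)|)(∑_{j=1}^{k'-1}(d^m_{j,k} - d^m_{j+1,k})/(j+1) + d^m_{k',k}/(k'+1))`. -/
theorem damped_tail_bound (m : ℝ) (hm : 0 < m) (k k' : ℕ) (hk : 1 ≤ k)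
    (hk' : 1 ≤ k') (hk'k : k' ≤ k) (x : ℝ) (hx : x ∈ Set.Ioo (0 : ℝ) (2 * Real.pi)) :
    |(Real.pi - x) / 2 - ∑ j ∈ Finset.Icc 1 k', dampL m k j * Real.sin (j * x) / j|
      ≤ (1 - dampL m k 1) * |Real.pi - x| / 2
        + (1 / |Real.sin (x / 2)|)
          * ((∑ j ∈ Finset.Icc 1 (k' - 1), (dampL m k j - dampL m k (j + 1)) / (j + 1))
            + dampL m k k' / (k' + 1)) := by

  obtain ⟨n, rfl⟩ : ∃ n, k' = n + 1 := ⟨k' - 1, by omega⟩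
  rw [abel_id (dampL m k) x n, Nat.add_sub_cancel, mul_div_assoc]
  have h1 : 0 ≤ 1 - dampL m k 1 := by
    have := damp_anti m hm k 0 (by omega)
    simp only [zero_add] at this
    have h0 : dampL m k 0 = 1 := by simp [dampL]
    linarith
  refine (abs_add_le _ _).trans (add_le_add ?_ ((abs_add_le _ _).trans ?_))
  · rw [abs_mul, abs_of_nonneg h1, abs_div, abs_of_pos (show (0 : ℝ) < 2 by norm_num)]
  rw [mul_add, Finset.mul_sum]
  refine add_le_add ((Finset.abs_sum_le_sum_abs _ _).trans (Finset.sum_le_sum ?_)) ?_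
  · intro j hj
    have hj' := (Finset.mem_Icc.1 hj).2
    have h2 := damp_anti m hm k j (by omega)
    rw [abs_mul, abs_of_nonneg (sub_nonneg.2 h2)]
    refine (mul_le_mul_of_nonneg_left (RR_bound j x hx) (sub_nonneg.2 h2)).trans_eq ?_
    ring
  · have h2 := damp_nonneg m k (n + 1) (by omega)
    rw [abs_mul, abs_of_nonneg h2]
    refine (mul_le_mul_of_nonneg_left (RR_bound (n + 1) x hx) h2).trans_eq ?_
    ring
end
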